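/- arXiv:1810.04812 — 3 statements merged into one kernel-verified Lean document; each statement's English description precedes it below -/
import Mathlib

section
/- Let R be a commutative semiring that is strict and has no zero divisors. Then either the polynomial T^2 + T + 1 is irreducible in R[T], or there exists a unit a of R such that a + a⁻¹ = 1; and in the latter case one has the factorization T^2 + T + 1 = (T + a)(T + a⁻¹) in R[T]. -/
open Polynomial

/- A monic quadratic over a commutative semiring without zero divisors is reducible only if it
splits as `(X + C c₁) * (X + C c₂)`. When its constant coefficient is `1`, comparing constant
coefficients gives `c₁ * c₂ = 1`, so `c₁` is a unit with inverse `c₂`. -/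

section CommSemiring

variable {R : Type*} [CommSemiring R]

theorem monic_X_sq_add_C_mul_X_add_one (b : R) : (X ^ 2 + C b * X + 1 : R[X]).Monic := by
  monicity!

theorem natDegree_X_sq_add_C_mul_X_add_one [Nontrivial R] (b : R) :
    (X ^ 2 + C b * X + 1 : R[X]).natDegree = 2 := by
  compute_degree!

theorem X_sq_add_C_add_inv_mul_X_add_one (a : Rˣ) :
    (X ^ 2 + C ((a : R) + ((a⁻¹ : Rˣ) : R)) * X + 1 : R[X]) =
      (X + C (a : R)) * (X + C ((a⁻¹ : Rˣ) : R)) := by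
  have hmul : (C (a : R) * C ((a⁻¹ : Rˣ) : R) : R[X]) = 1 := by
    rw [← C_mul, Units.mul_inv, C_1]
  rw [C_add, ← hmul]
  ring

theorem not_irreducible_X_sq_add_C_mul_X_add_one_iff [NoZeroDivisors R] (b : R) :
    ¬Irreducible (X ^ 2 + C b * X + 1 : R[X]) ↔
      ∃ a : Rˣ, (a : R) + ((a⁻¹ : Rˣ) : R) = b := by
  rcases subsingleton_or_nontrivial R with _ | _
  · exact iff_of_true (fun h ↦ h.not_isUnit (isUnit_of_subsingleton _))
      ⟨1, Subsingleton.elim _ _⟩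
  have hcoeff_zero : (X ^ 2 + C b * X + 1 : R[X]).coeff 0 = 1 := by simp
  have hcoeff_one : (X ^ 2 + C b * X + 1 : R[X]).coeff 1 = b := by
    simp [coeff_X_pow, coeff_one]
  rw [(monic_X_sq_add_C_mul_X_add_one b).not_irreducible_iff_exists_add_mul_eq_coeff
    (natDegree_X_sq_add_C_mul_X_add_one b), hcoeff_zero, hcoeff_one]
  constructor
  · rintro ⟨c₁, c₂, hmul, hadd⟩
    exact ⟨Units.mkOfMulEqOne c₁ c₂ hmul.symm, hadd.symm⟩
  · rintro ⟨a, ha⟩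
    exact ⟨a, (a⁻¹ : Rˣ), a.mul_inv.symm, ha.symm⟩

theorem irreducible_or_factor_quadratic_general [NoZeroDivisors R] (b : R) :
    Irreducible (X ^ 2 + C b * X + 1 : R[X]) ∨
      ∃ a : Rˣ, (a : R) + ((a⁻¹ : Rˣ) : R) = b ∧
        (X ^ 2 + C b * X + 1 : R[X]) = (X + C (a : R)) * (X + C ((a⁻¹ : Rˣ) : R)) := by
  refine or_iff_not_imp_left.mpr fun hred ↦ ?_
  obtain ⟨a, rfl⟩ := (not_irreducible_X_sq_add_C_mul_X_add_one_iff b).mp hred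
  exact ⟨a, rfl, X_sq_add_C_add_inv_mul_X_add_one a⟩

end CommSemiring

/-- Over a strict commutative semiring without zero divisors, either
`T ^ 2 + T + 1` is irreducible, or there is a unit `a` with `a + a⁻¹ = 1`, in
which case `T ^ 2 + T + 1 = (T + a) * (T + a⁻¹)`. -/
theorem irreducible_or_factor_quadratic
    (R : Type*) [CommSemiring R]
    (hstrict : ∀ a b : R, a + b = 0 → a = 0 ∧ b = 0)
    (hnzd : ∀ a b : R, a * b = 0 → a = 0 ∨ b = 0) :
    Irreducible ((X : R[X]) ^ 2 + X + 1) ∨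
      ∃ a : Rˣ, (a : R) + ((a⁻¹ : Rˣ) : R) = 1 ∧
        (X : R[X]) ^ 2 + X + 1 = (X + C (a : R)) * (X + C ((a⁻¹ : Rˣ) : R)) := by
  have : NoZeroDivisors R := ⟨fun {a b} ↦ hnzd a b⟩
  simpa only [C_1, one_mul] using irreducible_or_factor_quadratic_general (1 : R)
end

section
/- Let R be a commutative semiring that is strict and has no zero divisors. Then either the polynomial T^4 + T^2 + 1 is irreducible in R[T], or there exists a unit a of R such that a + a⁻¹ = 1; and in the latter case one has the factorization T^4 + T^2 + 1 = (T^2 + a)(T^2 + a⁻¹) in R[T]. -/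
/-!
The polynomial `T ^ 4 + T ^ 2 + 1` is `q(T ^ 2)` for the quadratic `q = T ^ 2 + T + 1`. Over a
strict semiring without zero divisors no cancellation occurs in the coefficients of a product, so
the support of `f * g` is the sumset of the supports of `f` and `g`. When `f * g = q(T ^ n)` has
nonzero constant term, both supports therefore lie in the multiples of `n`, so that `f` and `g` are
themselves polynomials in `T ^ n` and the factorization descends to one of `q`. Finally, the monic
quadratic `q` is reducible only if `q = (T + a) * (T + b)`, that is, `a * b = 1` and `a + b = 1`.
-/

open Polynomial

theorem subsingleton_addUnits_of_add_eq_zero {M : Type*} [AddMonoid M]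
    (h : ∀ a b : M, a + b = 0 → a = 0) : Subsingleton (AddUnits M) :=
  subsingleton_of_forall_eq 0 fun u ↦ AddUnits.ext (h u ↑(-u) u.add_neg)

theorem coeff_mul_add_ne_zero {R : Type*} [Semiring R] [Subsingleton (AddUnits R)]
    [NoZeroDivisors R] {f g : R[X]} {i j : ℕ} (hf : f.coeff i ≠ 0) (hg : g.coeff j ≠ 0) :
    (f * g).coeff (i + j) ≠ 0 := by
  intro h
  rw [coeff_mul, Finset.sum_eq_zero_iff] at h
  exact mul_ne_zero hf hg (h (i, j) (by simp))

section Expand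

variable {R : Type*} [CommSemiring R] {n : ℕ}

theorem mem_range_expand_iff (hn : n ≠ 0) {f : R[X]} :
    f ∈ Set.range (expand R n) ↔ ∀ i, f.coeff i ≠ 0 → n ∣ i := by
  constructor
  · rintro ⟨q, rfl⟩ i hi
    rw [coeff_expand hn.bot_lt] at hi
    exact (ite_ne_right_iff.mp hi).1
  · refine fun h ↦ ⟨contract n f, ext fun i ↦ ?_⟩
    rw [coeff_expand hn.bot_lt, coeff_contract hn]
    split_ifs with hi
    · rw [Nat.div_mul_cancel hi]
    · exact (not_imp_comm.mp (h i) hi).symm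

variable [NoZeroDivisors R]

theorem isUnit_of_isUnit_expand (hn : n ≠ 0) {q : R[X]} (h : IsUnit (expand R n q)) :
    IsUnit q := by
  obtain ⟨r, hr, hrq⟩ := isUnit_iff.mp h
  rw [(expand_eq_C hn.bot_lt).mp hrq.symm]
  exact hr.map C

variable [Subsingleton (AddUnits R)]

theorem mem_range_expand_of_mul_mem (hn : n ≠ 0) {f g : R[X]}
    (hfg : f * g ∈ Set.range (expand R n)) (hg : g.coeff 0 ≠ 0) :
    f ∈ Set.range (expand R n) :=
  (mem_range_expand_iff hn).mpr fun i hi ↦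
    (mem_range_expand_iff hn).mp hfg i (coeff_mul_add_ne_zero hi hg)

theorem irreducible_expand_of_coeff_zero_ne_zero (hn : n ≠ 0) {q : R[X]} (hq : Irreducible q)
    (hq₀ : q.coeff 0 ≠ 0) : Irreducible (expand R n q) := by
  refine ⟨fun h ↦ hq.not_isUnit (isUnit_of_isUnit_expand hn h), fun f g hfg ↦ ?_⟩
  have hfg₀ : f.coeff 0 * g.coeff 0 ≠ 0 := by
    rwa [← mul_coeff_zero, ← hfg, coeff_expand hn.bot_lt, if_pos (dvd_zero n), Nat.zero_div]
  obtain ⟨f, rfl⟩ := mem_range_expand_of_mul_mem hn ⟨q, hfg⟩ (right_ne_zero_of_mul hfg₀)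
  obtain ⟨g, rfl⟩ :=
    mem_range_expand_of_mul_mem hn ⟨q, hfg.trans (mul_comm _ _)⟩ (left_ne_zero_of_mul hfg₀)
  have hq_eq : q = f * g := expand_injective hn.bot_lt (hfg.trans (map_mul _ _ _).symm)
  exact (hq.isUnit_or_isUnit hq_eq).imp (·.map (expand R n)) (·.map (expand R n))

end Expand

theorem irreducible_X_sq_add_X_add_one_or_exists_unit {R : Type*} [CommSemiring R]
    [Nontrivial R] [NoZeroDivisors R] :
    Irreducible (X ^ 2 + X + 1 : R[X]) ∨ ∃ a : Rˣ, (a : R) + ((a⁻¹ : Rˣ) : R) = 1 := by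
  have hmonic : (X ^ 2 + X + 1 : R[X]).Monic := by monicity!
  have hdeg : (X ^ 2 + X + 1 : R[X]).natDegree = 2 := by compute_degree!
  refine or_iff_not_imp_left.mpr fun hred ↦ ?_
  obtain ⟨a, b, hmul, hadd⟩ := (hmonic.not_irreducible_iff_exists_add_mul_eq_coeff hdeg).mp hred
  have hab : a * b = 1 := by simpa using hmul.symm
  have hsum : a + b = 1 := by simpa [coeff_X_pow, coeff_one] using hadd.symm
  exact ⟨Units.mkOfMulEqOne a b hab, hsum⟩

theorem X_pow_four_add_X_sq_add_one_eq_mul {R : Type*} [CommSemiring R] {a b : R}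
    (hadd : a + b = 1) (hmul : a * b = 1) :
    (X ^ 4 + X ^ 2 + 1 : R[X]) = (X ^ 2 + C a) * (X ^ 2 + C b) :=
  calc (X ^ 4 + X ^ 2 + 1 : R[X])
      = X ^ 4 + C (a + b) * X ^ 2 + C (a * b) := by rw [hadd, hmul, C_1, one_mul]
    _ = (X ^ 2 + C a) * (X ^ 2 + C b) := by rw [C_add, C_mul]; ring

/-- Over a strict commutative semiring without zero divisors, either
`T ^ 4 + T ^ 2 + 1` is irreducible, or there is a unit `a` with `a + a⁻¹ = 1`,
in which case `T ^ 4 + T ^ 2 + 1 = (T ^ 2 + a) * (T ^ 2 + a⁻¹)`. -/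
theorem irreducible_or_factor_quartic
    (R : Type*) [CommSemiring R]
    (hstrict : ∀ a b : R, a + b = 0 → a = 0 ∧ b = 0)
    (hnzd : ∀ a b : R, a * b = 0 → a = 0 ∨ b = 0) :
    Irreducible ((X : R[X]) ^ 4 + X ^ 2 + 1) ∨
      ∃ a : Rˣ, (a : R) + ((a⁻¹ : Rˣ) : R) = 1 ∧
        (X : R[X]) ^ 4 + X ^ 2 + 1 =
          (X ^ 2 + C (a : R)) * (X ^ 2 + C ((a⁻¹ : Rˣ) : R)) := by
  rcases subsingleton_or_nontrivial R with _ | _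
  · exact .inr ⟨1, Subsingleton.elim _ _, Subsingleton.elim _ _⟩
  have : NoZeroDivisors R := ⟨hnzd _ _⟩
  have : Subsingleton (AddUnits R) :=
    subsingleton_addUnits_of_add_eq_zero fun a b h ↦ (hstrict a b h).1
  have hexpand : expand R 2 (X ^ 2 + X + 1) = X ^ 4 + X ^ 2 + 1 := by
    simp [← pow_mul]
  rw [← hexpand]
  refine irreducible_X_sq_add_X_add_one_or_exists_unit.imp
    (irreducible_expand_of_coeff_zero_ne_zero two_ne_zero · (by simp)) ?_
  rintro ⟨a, ha⟩
  exact ⟨a, ha, hexpand.trans (X_pow_four_add_X_sq_add_one_eq_mul ha a.mul_inv)⟩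
end

section
/- In the polynomial semiring over the tropical semiring Tropical(WithTop ℝ), the identity (T + 1)(T^2 + 1) = (T + 1)^3 holds, and both T + 1 and T^2 + 1 are irreducible; hence the tropical polynomial semiring does not satisfy unique factorization, since the two factorizations consist of irreducibles with different multisets of degrees {1,2} and {1,1,1}. -/
/-!
When `1 + 1 = 1`, every coefficient of `(T + 1)³` collapses to `1`, so `(T + 1)³` and
`(T + 1)(T² + 1)` are both `T³ + T² + T + 1`. Idempotency also forbids cancellation: a sum vanishes
only if both summands do. A splitting `T² + 1 = (T + a)(T + b)` would need `a + b = 0`, hence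
`a = b = 0`, contradicting `ab = 1`.
-/

open Polynomial

section Idempotent

variable {R : Type*}

theorem add_self_of_one_add_one_eq_one [NonAssocSemiring R] (h : (1 : R) + 1 = 1) (a : R) :
    a + a = a := by
  rw [← two_mul, ← one_add_one_eq_two, h, one_mul]

theorem subsingleton_addUnits_of_one_add_one_eq_one [NonAssocSemiring R] (h : (1 : R) + 1 = 1) :
    Subsingleton (AddUnits R) := by
  refine subsingleton_of_forall_eq 0 fun u => AddUnits.ext ?_
  calc (u : R) = u + (u + ↑(-u)) := by rw [AddUnits.add_neg, add_zero]
    _ = u + ↑(-u) := by rw [← add_assoc, add_self_of_one_add_one_eq_one h]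
    _ = 0 := u.add_neg

theorem add_one_mul_sq_add_one_eq_add_one_pow_three [CommSemiring R] (h : (1 : R) + 1 = 1)
    (x : R) : (x + 1) * (x ^ 2 + 1) = (x + 1) ^ 3 := by
  have add_self (a : R) : a + a = a := add_self_of_one_add_one_eq_one h a
  calc (x + 1) * (x ^ 2 + 1) = x ^ 3 + x ^ 2 + x + 1 := by ring
    _ = x ^ 3 + (x ^ 2 + x ^ 2 + x ^ 2) + (x + x + x) + 1 := by simp only [add_self]
    _ = (x + 1) ^ 3 := by ring

end Idempotent

section Irreducible

variable {R : Type*} [CommSemiring R] [NoZeroDivisors R] [Nontrivial R]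

theorem irreducible_X_add_C (r : R) : Irreducible (X + C r) := by
  refine (monic_X_add_C r).irreducible_iff_natDegree.mpr ⟨X_add_C_ne_one r, ?_⟩
  intro f g hf hg hfg
  have hdeg : f.natDegree + g.natDegree = 1 := by
    rw [← hf.natDegree_mul hg, hfg, natDegree_X_add_C]
  lia

theorem irreducible_X_sq_add_C [Subsingleton (AddUnits R)] {r : R} (hr : r ≠ 0) :
    Irreducible (X ^ 2 + C r) := by
  by_contra hred
  obtain ⟨a, b, hmul, hadd⟩ :=
    ((monic_X_pow_add_C r two_ne_zero).not_irreducible_iff_exists_add_mul_eq_coeff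
      natDegree_X_pow_add_C).mp hred
  have hr_eq : r = a * b := by simpa [coeff_X_pow] using hmul
  have hab : a + b = 0 := by simpa [coeff_X_pow, coeff_C] using hadd.symm
  exact hr (by rw [hr_eq, (add_eq_zero.mp hab).1, zero_mul])

end Irreducible

theorem tropical_polynomial_not_UFD_general {R : Type*} [CommSemiring R] [NoZeroDivisors R]
    [Nontrivial R] (h : (1 : R) + 1 = 1) :
    ((X : R[X]) + 1) * (X ^ 2 + 1) = (X + 1) ^ 3 ∧
    Irreducible ((X : R[X]) + 1) ∧
    Irreducible ((X : R[X]) ^ 2 + 1) ∧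
    ∃ l₁ l₂ : List R[X],
      (∀ p ∈ l₁, Irreducible p) ∧ (∀ p ∈ l₂, Irreducible p) ∧
      l₁.prod = ((X : R[X]) + 1) * (X ^ 2 + 1) ∧
      l₂.prod = ((X : R[X]) + 1) * (X ^ 2 + 1) ∧
      (↑(l₁.map Polynomial.natDegree) : Multiset ℕ) = {1, 2} ∧
      (↑(l₂.map Polynomial.natDegree) : Multiset ℕ) = {1, 1, 1} ∧
      ({1, 2} : Multiset ℕ) ≠ {1, 1, 1} := by
  have := subsingleton_addUnits_of_one_add_one_eq_one h
  have hC : (1 : R[X]) + 1 = 1 := by rw [← C_1, ← C_add, h]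
  have identity := add_one_mul_sq_add_one_eq_add_one_pow_three hC X
  have linear_irreducible : Irreducible ((X : R[X]) + 1) := by
    simpa only [C_1] using irreducible_X_add_C (1 : R)
  have quadratic_irreducible : Irreducible ((X : R[X]) ^ 2 + 1) := by
    simpa only [C_1] using irreducible_X_sq_add_C (one_ne_zero (α := R))
  have natDegree_linear : ((X : R[X]) + 1).natDegree = 1 := by
    simpa only [C_1] using natDegree_X_add_C (1 : R)
  have natDegree_quadratic : ((X : R[X]) ^ 2 + 1).natDegree = 2 := by
    simpa only [C_1] using natDegree_X_pow_add_C (n := 2) (r := (1 : R))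
  refine ⟨identity, linear_irreducible, quadratic_irreducible,
    [X + 1, X ^ 2 + 1], List.replicate 3 (X + 1), ?_, ?_, ?_, ?_, ?_, ?_, by decide⟩
  · simp [linear_irreducible, quadratic_irreducible]
  · simp [linear_irreducible]
  · simp
  · rw [List.prod_replicate, identity]
  · simp only [List.map_cons, List.map_nil, natDegree_linear, natDegree_quadratic]
    rfl
  · rw [List.map_replicate, natDegree_linear]
    rfl

/-- In the polynomial semiring over the tropical semiring `Tropical (WithTop ℝ)`
the identity `(T + 1)(T² + 1) = (T + 1)³` holds with both `T + 1` and `T² + 1`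
irreducible; hence the tropical polynomial semiring does not satisfy unique
factorization, the multisets of degrees `{1, 2}` and `{1, 1, 1}` being
different. -/
theorem tropical_polynomial_not_UFD :
    ((X : (Tropical (WithTop ℝ))[X]) + 1) * (X ^ 2 + 1) = (X + 1) ^ 3 ∧
    Irreducible ((X : (Tropical (WithTop ℝ))[X]) + 1) ∧
    Irreducible ((X : (Tropical (WithTop ℝ))[X]) ^ 2 + 1) ∧
    ∃ l₁ l₂ : List (Tropical (WithTop ℝ))[X],
      (∀ p ∈ l₁, Irreducible p) ∧ (∀ p ∈ l₂, Irreducible p) ∧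
      l₁.prod = ((X : (Tropical (WithTop ℝ))[X]) + 1) * (X ^ 2 + 1) ∧
      l₂.prod = ((X : (Tropical (WithTop ℝ))[X]) + 1) * (X ^ 2 + 1) ∧
      (↑(l₁.map Polynomial.natDegree) : Multiset ℕ) = {1, 2} ∧
      (↑(l₂.map Polynomial.natDegree) : Multiset ℕ) = {1, 1, 1} ∧
      ({1, 2} : Multiset ℕ) ≠ {1, 1, 1} :=
  tropical_polynomial_not_UFD_general (Tropical.add_self 1)
end
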